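/- For integers i, j, c with 2 ≤ c ≤ i and j ≥ i + 2, define F(i,j,c) ∈ ℚ(t) by F(i,j,c) := h_{j+c−i−2}·h_{j+c−i−1}·h_i·h_{i+1}/(h_j·h_{j+1}·h_{c−2}·h_{c−1}) − t^{2(c−1)}·h_1·h_{i−c+1}·h_{j−i−1}/(h_{j+1}·h_{c−2}) − t^{4c}·h_{i−c}·h_{i−c+1}·h_{j−i−2}·h_{j−i−1}/(h_{c−2}·h_{c−1}·h_j·h_{j+1}). Then F(i,j,c) = 1. -/

import Mathlib

open Polynomial

/-- `hpoly α = 1 + t^2 + ⋯ + t^{2α}` for `α ≥ 0`. -/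
noncomputable def hpoly (α : ℤ) : Polynomial ℚ :=
  ∑ m ∈ Finset.range (α.toNat + 1), X ^ (2 * m)

/-- `Ppoly 0 = 1` and `Ppoly α = hpoly 0 ⋯ hpoly (α-1)` for `α > 0`. -/
noncomputable def Ppoly (α : ℤ) : Polynomial ℚ :=
  ∏ m ∈ Finset.range α.toNat, hpoly (m : ℤ)

/-- The image of `hpoly α` in the field of rational functions `ℚ(t)`. -/
noncomputable def hQ (α : ℤ) : RatFunc ℚ :=
  algebraMap (Polynomial ℚ) (RatFunc ℚ) (hpoly α)

/-- The image of `Ppoly α` in the field of rational functions `ℚ(t)`. -/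
noncomputable def PQ (α : ℤ) : RatFunc ℚ :=
  algebraMap (Polynomial ℚ) (RatFunc ℚ) (Ppoly α)

/-- The variable `t` of `ℚ(t)`. -/
noncomputable def tQ : RatFunc ℚ := RatFunc.X

/-- `F(i,j,c)`: the reduced form of identity (5.3) of the Appendix. -/
noncomputable def Ffun (i j c : ℤ) : RatFunc ℚ :=
  hQ (j + c - i - 2) * hQ (j + c - i - 1) * hQ i * hQ (i + 1) /
      (hQ j * hQ (j + 1) * hQ (c - 2) * hQ (c - 1)) -
    tQ ^ (2 * (c - 1)).toNat * hQ 1 * hQ (i - c + 1) * hQ (j - i - 1) /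
      (hQ (j + 1) * hQ (c - 2)) -
    tQ ^ (4 * c).toNat * hQ (i - c) * hQ (i - c + 1) * hQ (j - i - 2) *
        hQ (j - i - 1) /
      (hQ (c - 2) * hQ (c - 1) * hQ j * hQ (j + 1))

/-!
Put `q = t ^ 2` and let `[n] = 1 + q + ⋯ + q ^ (n - 1)`. Everything follows from the splitting rule
`[x + m] [x + n] = [x] [x + m + n] + q ^ x [m] [n]`. With `a = c - 1`, `m = i - c + 1` and
`n = j - i - 1`, the numerator of the first term of `F` is
`([a + m + 1] [a + n + 1]) ([a + m + 2] [a + n + 2])`. Splitting the first factor at `x = a`, and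
the second at `x = a + 1` or at `x = a + 2` according to the summand it multiplies, gives the
common denominator plus the numerators of the other two terms, by `[a + 2] + q [a] = [2] [a + 1]`.
-/

/-- The `q`-integer `[n] = 1 + q + ⋯ + q ^ (n - 1)`, in terms of which the identity is proved. The
index is shifted by one against `hQ`: for `q = t ^ 2` and `n ≥ 1`, `[n] = h_{n - 1}`. -/
def qNat {R : Type*} [Semiring R] (q : R) (n : ℕ) : R :=
  ∑ k ∈ Finset.range n, q ^ k

section Semiring

variable {R : Type*} [Semiring R] (q : R)

lemma qNat_zero : qNat q 0 = 0 := by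
  simp [qNat]

lemma qNat_succ (n : ℕ) : qNat q (n + 1) = q * qNat q n + 1 :=
  geom_sum_succ

lemma qNat_add (m n : ℕ) : qNat q (m + n) = qNat q m + q ^ m * qNat q n := by
  simp only [qNat, Finset.sum_range_add, pow_add, Finset.mul_sum]

lemma qNat_add_two_add_mul (n : ℕ) :
    qNat q (n + 2) + q * qNat q n = qNat q 2 * qNat q (n + 1) := by
  simp only [qNat_succ, qNat_zero]
  noncomm_ring

lemma map_qNat {S : Type*} [Semiring S] (f : R →+* S) (n : ℕ) :
    f (qNat q n) = qNat (f q) n := by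
  simp only [qNat, map_sum, map_pow]

end Semiring

section CommSemiring

variable {R : Type*} [CommSemiring R] (q : R)

lemma qNat_add_mul_qNat_add (x m n : ℕ) :
    qNat q (x + m) * qNat q (x + n) =
      qNat q x * qNat q (x + m + n) + q ^ x * qNat q m * qNat q n := by
  have hcomm : qNat q x + q ^ x * qNat q n = qNat q n + q ^ n * qNat q x := by
    rw [← qNat_add, ← qNat_add, add_comm]
  calc
    qNat q (x + m) * qNat q (x + n)
    _ = qNat q x * (qNat q x + q ^ x * qNat q n) +
          q ^ x * qNat q m * (qNat q x + q ^ x * qNat q n) := by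
      rw [qNat_add q x m, qNat_add q x n, add_mul]
    _ = qNat q x * (qNat q x + q ^ x * qNat q n) +
          q ^ x * qNat q m * (qNat q n + q ^ n * qNat q x) := by
      nth_rw 2 [hcomm]
    _ = qNat q x * (qNat q (x + n) + q ^ (x + n) * qNat q m) +
          q ^ x * qNat q m * qNat q n := by
      rw [qNat_add q x n]
      ring
    _ = qNat q x * qNat q (x + m + n) + q ^ x * qNat q m * qNat q n := by
      rw [← qNat_add, add_right_comm]

lemma qNat_mul_add_mul_qNat_mul (a m n : ℕ) :
    qNat q (a + m + 2) * qNat q (a + n + 2) + q * qNat q a * qNat q (a + m + n + 2) =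
      qNat q 2 * qNat q (a + 1) * qNat q (a + m + n + 2) + q ^ (a + 2) * qNat q m * qNat q n := by
  have hsplit : qNat q (a + m + 2) * qNat q (a + n + 2) =
      qNat q (a + 2) * qNat q (a + m + n + 2) + q ^ (a + 2) * qNat q m * qNat q n := by
    convert qNat_add_mul_qNat_add q (a + 2) m n using 3 <;> ring_nf
  rw [hsplit, add_right_comm, ← add_mul, qNat_add_two_add_mul]

lemma qNat_mul_consecutive (a m n : ℕ) :
    qNat q (a + n + 1) * qNat q (a + n + 2) * qNat q (a + m + 1) * qNat q (a + m + 2) =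
      qNat q a * qNat q (a + 1) * qNat q (a + m + n + 2) * qNat q (a + m + n + 3) +
      q ^ a * qNat q 2 * qNat q (m + 1) * qNat q (n + 1) *
        (qNat q (a + 1) * qNat q (a + m + n + 2)) +
      q ^ (2 * a + 2) * qNat q m * qNat q (m + 1) * qNat q n * qNat q (n + 1) := by
  have hlower : qNat q (a + m + 1) * qNat q (a + n + 1) =
      qNat q a * qNat q (a + m + n + 2) + q ^ a * qNat q (m + 1) * qNat q (n + 1) := by
    convert qNat_add_mul_qNat_add q a (m + 1) (n + 1) using 3 <;> ring_nf
  have hupper : qNat q (a + m + 2) * qNat q (a + n + 2) =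
      qNat q (a + 1) * qNat q (a + m + n + 3) + q ^ (a + 1) * qNat q (m + 1) * qNat q (n + 1) := by
    convert qNat_add_mul_qNat_add q (a + 1) (m + 1) (n + 1) using 3 <;> ring_nf
  calc
    _ = qNat q a * qNat q (a + m + n + 2) * (qNat q (a + m + 2) * qNat q (a + n + 2)) +
          q ^ a * qNat q (m + 1) * qNat q (n + 1) *
            (qNat q (a + m + 2) * qNat q (a + n + 2)) := by
      rw [← add_mul, ← hlower]
      ring
    _ = qNat q a * qNat q (a + 1) * qNat q (a + m + n + 2) * qNat q (a + m + n + 3) +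
          q ^ a * qNat q (m + 1) * qNat q (n + 1) *
            (qNat q (a + m + 2) * qNat q (a + n + 2) +
              q * qNat q a * qNat q (a + m + n + 2)) := by
      nth_rw 1 [hupper]
      ring
    _ = _ := by
      rw [qNat_mul_add_mul_qNat_mul]
      ring

end CommSemiring

/-- `F(i, j, c)` with `t ^ 2` replaced by an element `q` of an arbitrary field, in the coordinates
`a = c - 1`, `m = i - c + 1`, `n = j - i - 1`, which keep all indices free of subtraction. -/
def qFfun {K : Type*} [Field K] (q : K) (a m n : ℕ) : K :=
  qNat q (a + n + 1) * qNat q (a + n + 2) * qNat q (a + m + 1) * qNat q (a + m + 2) /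
      (qNat q (a + m + n + 2) * qNat q (a + m + n + 3) * qNat q a * qNat q (a + 1)) -
    q ^ a * qNat q 2 * qNat q (m + 1) * qNat q (n + 1) /
      (qNat q (a + m + n + 3) * qNat q a) -
    q ^ (2 * a + 2) * qNat q m * qNat q (m + 1) * qNat q n * qNat q (n + 1) /
      (qNat q a * qNat q (a + 1) * qNat q (a + m + n + 2) * qNat q (a + m + n + 3))

theorem Ffun_eq_one_general {K : Type*} [Field K] {q : K} {a m n : ℕ} (ha : qNat q a ≠ 0)
    (ha' : qNat q (a + 1) ≠ 0) (hN : qNat q (a + m + n + 2) ≠ 0)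
    (hN' : qNat q (a + m + n + 3) ≠ 0) : qFfun q a m n = 1 := by
  rw [qFfun, qNat_mul_consecutive]
  field_simp
  ring

lemma hQ_eq_qNat {α : ℤ} {n : ℕ} (h : α + 1 = n) (hn : n ≠ 0) : hQ α = qNat (tQ ^ 2) n := by
  have hα : α.toNat + 1 = n := by omega
  simp [hQ, hpoly, qNat, tQ, hα, pow_mul]

lemma Ffun_eq_qFfun {i j c : ℤ} (hc : 2 ≤ c) (hci : c ≤ i) (hj : i + 2 ≤ j) :
    Ffun i j c = qFfun (tQ ^ 2) (c - 1).toNat (i - c + 1).toNat (j - i - 1).toNat := by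
  rw [Ffun, qFfun, ← pow_mul, ← pow_mul]
  congr! <;> first | exact hQ_eq_qNat (by omega) (by omega) | omega

lemma qNat_algebraMap_ne_zero {K : Type*} [Field K] {p : K[X]} (hp : p.Monic)
    (hdeg : 0 < p.natDegree) {n : ℕ} (hn : n ≠ 0) :
    qNat (algebraMap K[X] (RatFunc K) p) n ≠ 0 := by
  rw [← map_qNat]
  exact RatFunc.algebraMap_ne_zero (hp.geom_sum hdeg hn).ne_zero

lemma qNat_tQ_sq_ne_zero {n : ℕ} (hn : n ≠ 0) : qNat (tQ ^ 2) n ≠ 0 := by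
  have htQ : tQ ^ 2 = algebraMap ℚ[X] (RatFunc ℚ) (X ^ 2) := by simp [tQ]
  rw [htQ]
  exact qNat_algebraMap_ne_zero (monic_X_pow 2) (by simp) hn

/-- The reduced identity `F(i,j,c) = 1`. -/
theorem Ffun_eq_one (i j c : ℤ) (hc : 2 ≤ c) (hci : c ≤ i) (hj : j ≥ i + 2) :
    Ffun i j c = 1 := by
  rw [Ffun_eq_qFfun hc hci hj]
  apply Ffun_eq_one_general <;> exact qNat_tQ_sq_ne_zero (by omega)
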